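/- If λ is a partition of n and k a positive integer, then s_λ · p_k = Σ_ν sgn(ν/λ) s_ν, where the sum is over partitions ν ⊇ λ such that the skew shape ν/λ is a k-ribbon (a connected skew shape of k cells containing no 2×2 square), and sgn(ν/λ) = (−1)^{r−1} where r is the number of rows occupied by ν/λ (Murnaghan–Nakayama rule). -/

import Mathlib

open Classical

/- Partitions are represented by their row-length functions `λ : ℕ → ℕ`
(row `i` has `λ i` cells, rows weakly decreasing, eventually `0`).  The cell
`(i, j)` lies in the skew shape `γ/ρ` iff `ρ i ≤ j < γ i`. -/

/-- Membership of the cell `c` in the skew shape `γ/ρ`. -/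
def cellMem (ρ γ : ℕ → ℕ) (c : ℕ × ℕ) : Prop := ρ c.1 ≤ c.2 ∧ c.2 < γ c.1

/-- `γ/ρ` is a `k`-ribbon: `ρ ⊆ γ` and the cells of `γ/ρ` can be labeled
`b 0, …, b (k-1)` so that each next cell is one unit to the left of, or one unit
below, the previous cell.  (Equivalently, `γ/ρ` is a connected skew shape of `k`
cells containing no 2×2 square.) -/
def IsRibbon (ρ γ : ℕ → ℕ) (k : ℕ) : Prop :=
  (∀ i, ρ i ≤ γ i) ∧
  ∃ b : Fin k → ℕ × ℕ,
    Function.Injective b ∧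
    (∀ m, cellMem ρ γ (b m)) ∧
    (∀ c, cellMem ρ γ c → ∃ m, b m = c) ∧
    ∀ (m : Fin k) (h : (m : ℕ) + 1 < k),
      ((b ⟨(m : ℕ) + 1, h⟩).1 = (b m).1 ∧ (b m).2 = (b ⟨(m : ℕ) + 1, h⟩).2 + 1) ∨
      ((b ⟨(m : ℕ) + 1, h⟩).2 = (b m).2 ∧ (b ⟨(m : ℕ) + 1, h⟩).1 = (b m).1 + 1)

/-- Semistandard Young tableau of shape `λ` with entries in `ℕ` (recorded as a
function on all cells, equal to `0` outside the diagram): rows weakly increase,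
columns strictly increase. -/
def IsSSYT (lam : ℕ → ℕ) (T : ℕ × ℕ → ℕ) : Prop :=
  (∀ i j, ¬ j < lam i → T (i, j) = 0) ∧
  (∀ i j, j + 1 < lam i → T (i, j) ≤ T (i, j + 1)) ∧
  (∀ i j, j < lam (i + 1) → T (i, j) < T (i + 1, j))

/-- The Schur function `s_λ`: the coefficient of the monomial `L` is the number of
semistandard Young tableaux of shape `λ` and content `L` (the entry `v` stands for
the variable `x_v`). -/
noncomputable def schurS (lam : ℕ → ℕ) : MvPowerSeries ℕ ℚ :=
  fun L => (Nat.card {T : ℕ × ℕ → ℕ // IsSSYT lam T ∧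
    ∀ v, Nat.card {c : ℕ × ℕ // c.2 < lam c.1 ∧ T c = v} = L v} : ℚ)

/-- The power-sum symmetric function `p_k = Σ_i x_i^k`. -/
noncomputable def pS (k : ℕ) : MvPowerSeries ℕ ℚ :=
  fun d => if ∃ j, d = Finsupp.single j k then 1 else 0

/-!
With `a_α(x) = det (x_j ^ α_i)` and `δ = (N - 1, …, 1, 0)`, the elementary identity
`p_k * a_α = ∑ i, a_{α + k e_i}` holds for every exponent vector `α`. The alternants `a_{λ + δ}`
and the Schur polynomials, as generating functions of tableaux, satisfy the same branching rule in
the number of variables, up to the factors of the Vandermonde product; hence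
`a_{λ + δ} = (∏_{i < j} (x_i - x_j)) * s_λ`. In the identity for `α = λ + δ`, the term of index `i`
vanishes when `λ + δ + k e_i` has a repeated entry; otherwise sorting this vector is a cyclic
shift to `ν + δ`, where `ν / λ` is a `k`-ribbon with last row `i`, and the sign of the cycle is that
of the ribbon. Cancelling the Vandermonde product proves the rule in finitely many variables,
which is enough because a coefficient of a power series in countably many variables involves only
finitely many of them.
-/

namespace MurnaghanNakayama

open Finset

section Alternants

variable {R : Type*} [CommRing R]

open Matrix

theorem sum_det_updateRow_eq_sum_det_updateCol {ι : Type*} [Fintype ι] [DecidableEq ι]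
    (A B : Matrix ι ι R) :
    ∑ i, (A.updateRow i (B i)).det = ∑ j, (A.updateCol j fun i => B i j).det := by
  simp_rw [← cramer_transpose_apply, ← cramer_apply, cramer_eq_adjugate_mulVec,
    ← adjugate_transpose, mulVec, dotProduct, transpose_apply]
  exact sum_comm

theorem det_eq_of_forall_row_eq_smul_add_succ {n : ℕ} {A B : Matrix (Fin (n + 1)) (Fin (n + 1)) R}
    (c : Fin n → R) (hlast : ∀ j, A (Fin.last n) j = B (Fin.last n) j)
    (hrow : ∀ (i : Fin n) j, A i.castSucc j = B i.castSucc j + c i * A i.succ j) :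
    A.det = B.det := by
  rw [← det_submatrix_equiv_self Fin.revPerm A, ← det_submatrix_equiv_self Fin.revPerm B]
  refine det_eq_of_forall_row_eq_smul_add_pred (c ∘ Fin.rev) (fun j => ?_) fun i j => ?_
  · simpa using hlast j.rev
  · simpa [Fin.rev_succ, Fin.rev_castSucc] using hrow i.rev j.rev

/-- The alternant `det (x_j ^ a_i)` in the variables `x` with exponents `a`. -/
def alternant {ι : Type*} [Fintype ι] [DecidableEq ι] (x : ι → R) (a : ι → ℕ) : R :=
  det (of fun i j => x j ^ a i)

section FiniteIndex

variable {ι : Type*} [Fintype ι] [DecidableEq ι] (x : ι → R)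

theorem alternant_comp_perm (a : ι → ℕ) (σ : Equiv.Perm ι) :
    alternant x (a ∘ σ) = Equiv.Perm.sign σ * alternant x a :=
  det_permute σ (of fun i j => x j ^ a i)

theorem alternant_eq_zero_of_eq {a : ι → ℕ} {i j : ι} (hij : i ≠ j) (h : a i = a j) :
    alternant x a = 0 :=
  det_zero_of_row_eq hij (funext fun c => congrArg (x c ^ ·) h)

theorem sum_alternant_add_single (a : ι → ℕ) (k : ℕ) :
    ∑ i, alternant x (a + Pi.single i k) = (∑ j, x j ^ k) * alternant x a := by
  let A : Matrix ι ι R := of fun i j => x j ^ a i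
  let B : Matrix ι ι R := of fun i j => x j ^ k * x j ^ a i
  have hrow (i : ι) : alternant x (a + Pi.single i k) = (A.updateRow i (B i)).det := by
    refine congrArg det (Matrix.ext fun r j => ?_)
    obtain rfl | hr := eq_or_ne r i
    · simp [B, pow_add, mul_comm]
    · simp [A, hr]
  have hcol (j : ι) : (A.updateCol j fun i => B i j).det = x j ^ k * alternant x a := by
    have := det_updateCol_smul A j (x j ^ k) fun i => A i j
    rwa [updateCol_eq_self] at this
  simp_rw [hrow, sum_mul, ← hcol]
  exact sum_det_updateRow_eq_sum_det_updateCol A B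

theorem det_pow_sub_eq_sum_alternant {m n : ι → ℕ} (hmn : m ≤ n) (y : R) :
    det (of fun i j => x j ^ n i - x j ^ m i * y ^ (n i - m i)) = (∏ j, (x j - y)) *
      ∑ b ∈ Fintype.piFinset fun i => Ico (m i) (n i),
        (∏ i, y ^ (n i - 1 - b i)) * alternant x b := by
  simp_rw [← mul_geom_sum₂_Ico _ _ (hmn _)]
  rw [det_mul_row (fun j => x j - y) fun i j => ∑ e ∈ Ico (m i) (n i), x j ^ e * y ^ (n i - 1 - e)]
  congr 1
  have hexpand := (detRowAlternating (R := R) (n := ι)).toMultilinearMap.map_sum_finset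
    (fun i e j => y ^ (n i - 1 - e) * x j ^ e) fun i => Ico (m i) (n i)
  refine Eq.trans (congrArg det (Matrix.ext fun i j => ?_)) (hexpand.trans (sum_congr rfl ?_))
  · simp [mul_comm]
  · exact fun b _ => det_mul_column (fun i => y ^ (n i - 1 - b i)) (of fun i j => x j ^ b i)

end FiniteIndex

/-- Each row minus a multiple of the next vanishes in the column of the last variable, so that the
determinant reduces to a smaller one. -/
theorem alternant_succ {N : ℕ} (x : Fin (N + 1) → R) {a : Fin (N + 1) → ℕ} (ha : Antitone a) :
    alternant x a = (∏ j : Fin N, (x j.castSucc - x (Fin.last N))) *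
      ∑ b ∈ Fintype.piFinset fun i : Fin N => Ico (a i.succ) (a i.castSucc),
        x (Fin.last N) ^ a (Fin.last N) *
          (∏ i, x (Fin.last N) ^ (a i.castSucc - 1 - b i)) * alternant (x ∘ Fin.castSucc) b := by
  set y := x (Fin.last N)
  have hle (i : Fin N) : a i.succ ≤ a i.castSucc := ha i.castSucc_le_succ
  let d (i : Fin N) (j : Fin (N + 1)) : R :=
    x j ^ a i.castSucc - x j ^ a i.succ * y ^ (a i.castSucc - a i.succ)
  let B : Matrix (Fin (N + 1)) (Fin (N + 1)) R := of (Fin.snoc d fun j => x j ^ a (Fin.last N))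
  have hd (i : Fin N) : d i (Fin.last N) = 0 := by
    simp only [d, y, ← pow_add, Nat.add_sub_cancel' (hle i), sub_self]
  have hreduce : alternant x a = B.det :=
    det_eq_of_forall_row_eq_smul_add_succ (fun i => y ^ (a i.castSucc - a i.succ))
      (fun j => by simp [B]) fun i j => by simp [B, d, mul_comm]
  have hminor : B.submatrix Fin.castSucc Fin.castSucc = of fun i j => d i j.castSucc := by
    ext i j
    simp [B]
  rw [hreduce, det_succ_column B (Fin.last N), Fin.sum_univ_castSucc]
  have hdet := det_pow_sub_eq_sum_alternant (x ∘ Fin.castSucc) (m := fun i : Fin N => a i.succ)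
    (n := fun i => a i.castSucc) hle y
  have hzero (i : Fin N) : B i.castSucc (Fin.last N) = 0 := by simp [B, hd]
  have hlast : B (Fin.last N) (Fin.last N) = y ^ a (Fin.last N) := by simp [B, y]
  simp only [hzero, mul_zero, zero_mul, sum_const_zero, zero_add, hlast, Fin.succAbove_last,
    hminor, ← two_mul, pow_mul, neg_one_sq, one_pow, one_mul, mul_assoc, ← mul_sum]
  rw [mul_left_comm]
  exact congrArg _ hdet

end Alternants

section SupportedPi

variable {ι M : Type*} [Zero M]

/-- The functions on `ι` that vanish off `s` and take values in `t i` at each `i ∈ s`. -/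
noncomputable def supportedPi (s : Finset ι) (t : ι → Finset M) : Finset (ι → M) :=
  (s.finsupp t).map ⟨(⇑), DFunLike.coe_injective⟩

theorem mem_supportedPi {s : Finset ι} {t : ι → Finset M} {g : ι → M} :
    g ∈ supportedPi s t ↔ (∀ i ∈ s, g i ∈ t i) ∧ ∀ i ∉ s, g i = 0 := by
  simp only [supportedPi, mem_map, mem_finsupp_iff, Function.Embedding.coeFn_mk]
  constructor
  · rintro ⟨f, ⟨hsupp, hmem⟩, rfl⟩
    exact ⟨hmem, fun i hi => Finsupp.notMem_support_iff.mp fun h => hi (hsupp h)⟩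
  · rintro ⟨hmem, hzero⟩
    refine ⟨Finsupp.onFinset s g fun i hi => by_contra fun his => hi (hzero i his), ?_, rfl⟩
    exact ⟨Finsupp.support_onFinset_subset, hmem⟩

end SupportedPi

theorem eq_zero_of_antitone {lam : ℕ → ℕ} (hlam : Antitone lam) {N i : ℕ} (hN : lam N = 0)
    (hi : N ≤ i) : lam i = 0 :=
  Nat.eq_zero_of_le_zero (hN ▸ hlam hi)

section Interlacing

/-- The partitions `μ` with at most `N` rows interlacing `lam`, that is,
`lam (i + 1) ≤ μ i ≤ lam i` for all `i < N`. -/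
noncomputable def interlacing (N : ℕ) (lam : ℕ → ℕ) : Finset (ℕ → ℕ) :=
  supportedPi (range N) fun i => Icc (lam (i + 1)) (lam i)

theorem mem_interlacing {N : ℕ} {lam μ : ℕ → ℕ} :
    μ ∈ interlacing N lam ↔
      (∀ i < N, lam (i + 1) ≤ μ i ∧ μ i ≤ lam i) ∧ ∀ i, N ≤ i → μ i = 0 := by
  simp only [interlacing, mem_supportedPi, mem_range, mem_Icc, not_lt]

theorem antitone_of_mem_interlacing {N : ℕ} {lam μ : ℕ → ℕ} (hμ : μ ∈ interlacing N lam) :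
    Antitone μ := by
  rw [mem_interlacing] at hμ
  refine antitone_nat_of_succ_le fun i => ?_
  obtain hi | hi := lt_or_ge (i + 1) N
  · exact (hμ.1 _ hi).2.trans (hμ.1 i (by lia)).1
  · simp [hμ.2 _ hi]

theorem le_of_mem_interlacing {N : ℕ} {lam μ : ℕ → ℕ} (hμ : μ ∈ interlacing N lam) : μ ≤ lam := by
  rw [mem_interlacing] at hμ
  intro i
  obtain hi | hi := lt_or_ge i N
  · exact (hμ.1 i hi).2
  · simp [hμ.2 i hi]

/-- The exponents `lam i + (N - 1 - i)` of the alternant attached to a partition with at most `N`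
rows (its beta numbers). -/
def beta (N : ℕ) (lam : ℕ → ℕ) (i : Fin N) : ℕ := lam i + i.rev

theorem beta_strictAnti (N : ℕ) {lam : ℕ → ℕ} (hlam : Antitone lam) : StrictAnti (beta N lam) :=
  fun _ _ hij => add_lt_add_of_le_of_lt (hlam hij.le) (Fin.rev_lt_rev.mpr hij)

theorem sum_interlacing_beta {M : Type*} [AddCommMonoid M] (N : ℕ) (lam : ℕ → ℕ)
    (f : (Fin N → ℕ) → M) :
    ∑ μ ∈ interlacing N lam, f (beta N μ) =
      ∑ b ∈ Fintype.piFinset fun i : Fin N =>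
        Ico (beta (N + 1) lam i.succ) (beta (N + 1) lam i.castSucc), f b := by
  have hmem (b : Fin N → ℕ) : (b ∈ Fintype.piFinset fun i : Fin N =>
      Ico (beta (N + 1) lam i.succ) (beta (N + 1) lam i.castSucc)) ↔
      ∀ i : Fin N, lam (i + 1) + (N - 1 - i) ≤ b i ∧ b i ≤ lam i + (N - 1 - i) := by
    simp only [Fintype.mem_piFinset, mem_Ico, beta, Fin.val_rev, Fin.val_succ, Fin.val_castSucc]
    exact forall_congr' fun i => by lia
  refine sum_nbij' (beta N) (fun b i => if h : i < N then b ⟨i, h⟩ - (N - 1 - i) else 0)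
    (fun μ hμ => (hmem _).mpr fun i => ?_) (fun b hb => mem_interlacing.mpr
      ⟨fun i hi => ?_, fun i hi => dif_neg hi.not_gt⟩) (fun μ hμ => ?_) (fun b hb => ?_)
    fun _ _ => rfl
  · have := (mem_interlacing.mp hμ).1 i i.isLt
    simp only [beta, Fin.val_rev]
    lia
  · have := (hmem b).mp hb ⟨i, hi⟩
    simp only [hi, dite_true]
    lia
  · funext i
    split_ifs with hi
    · simp only [beta, Fin.val_rev]
      lia
    · exact ((mem_interlacing.mp hμ).2 i (not_lt.mp hi)).symm
  · funext i
    have := (hmem b).mp hb i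
    simp only [beta, Fin.val_rev, i.isLt, dite_true, Fin.eta]
    lia

variable {R : Type*} [CommRing R]

theorem alternant_beta_succ (N : ℕ) (x : ℕ → R) {lam : ℕ → ℕ} (hlam : Antitone lam) :
    alternant (fun j : Fin (N + 1) => x j) (beta (N + 1) lam) = (∏ j ∈ range N, (x j - x N)) *
      ∑ μ ∈ interlacing N lam, (∏ i ∈ range (N + 1), x N ^ (lam i - μ i)) *
        alternant (fun j : Fin N => x j) (beta N μ) := by
  rw [alternant_succ _ (beta_strictAnti _ hlam).antitone, Finset.prod_range,
    ← sum_interlacing_beta N lam fun b => _]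
  congr 1
  refine sum_congr rfl fun μ hμ => ?_
  rw [prod_range_succ, (mem_interlacing.mp hμ).2 N le_rfl, Finset.prod_range, mul_comm (∏ _, _)]
  congr 2
  · simp [beta]
  · refine prod_congr rfl fun i _ => congrArg (x N ^ ·) ?_
    simp only [beta, Fin.val_rev, Fin.val_castSucc]
    lia

end Interlacing

section Tableaux

theorem _root_.IsSSYT.row_le {lam : ℕ → ℕ} {T : ℕ × ℕ → ℕ} (hT : IsSSYT lam T) {i j j' : ℕ}
    (hj : j ≤ j') (hj' : j' < lam i) : T (i, j) ≤ T (i, j') := by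
  induction j', hj using Nat.le_induction with
  | base => rfl
  | succ m _ ih => exact (ih (by lia)).trans (hT.2.1 i m hj')

theorem _root_.IsSSYT.row_index_le {lam : ℕ → ℕ} {T : ℕ × ℕ → ℕ} (hT : IsSSYT lam T)
    (hlam : Antitone lam) {i j : ℕ} (hj : j < lam i) : i ≤ T (i, j) := by
  induction i with
  | zero => exact Nat.zero_le _
  | succ i ih => exact (ih (hj.trans_le (hlam i.le_succ))).trans_lt (hT.2.2 i j hj)

/-- The cells of the first `N` rows of the diagram of `lam`. -/
def cells (N : ℕ) (lam : ℕ → ℕ) : Finset (ℕ × ℕ) :=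
  (range N).biUnion fun i => {i} ×ˢ range (lam i)

theorem mem_cells {N : ℕ} {lam : ℕ → ℕ} {c : ℕ × ℕ} :
    c ∈ cells N lam ↔ c.1 < N ∧ c.2 < lam c.1 := by
  simp only [cells, mem_biUnion, mem_range, mem_product, mem_singleton]
  constructor
  · rintro ⟨i, hi, rfl, hc⟩
    exact ⟨hi, hc⟩
  · exact fun ⟨hN, hc⟩ => ⟨c.1, hN, rfl, hc⟩

theorem prod_cells {M : Type*} [CommMonoid M] (N : ℕ) (lam : ℕ → ℕ) (f : ℕ × ℕ → M) :
    ∏ c ∈ cells N lam, f c = ∏ i ∈ range N, ∏ j ∈ range (lam i), f (i, j) :=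
  prod_finset_product _ _ _ fun c => by simp only [mem_cells, mem_range]

theorem mem_cells_of_antitone {N : ℕ} {lam : ℕ → ℕ} (hlam : Antitone lam) (hN : lam N = 0)
    {c : ℕ × ℕ} : c ∈ cells N lam ↔ c.2 < lam c.1 := by
  refine mem_cells.trans (and_iff_right_of_imp fun hc => lt_of_not_ge fun hle => ?_)
  simp [eq_zero_of_antitone hlam hN hle] at hc

/-- The semistandard tableaux of shape `lam`, a partition with at most `N` rows, with entries
less than `N`. -/
noncomputable def tableaux (N : ℕ) (lam : ℕ → ℕ) : Finset (ℕ × ℕ → ℕ) :=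
  {T ∈ supportedPi (cells N lam) fun _ => range N | IsSSYT lam T}

theorem mem_tableaux {N : ℕ} {lam : ℕ → ℕ} (hlam : Antitone lam) (hN : lam N = 0)
    {T : ℕ × ℕ → ℕ} :
    T ∈ tableaux N lam ↔ IsSSYT lam T ∧ ∀ i j, j < lam i → T (i, j) < N := by
  simp only [tableaux, mem_filter, mem_supportedPi, mem_cells_of_antitone hlam hN, mem_range,
    Prod.forall]
  exact ⟨fun h => ⟨h.2, h.1.1⟩, fun h => ⟨⟨h.2, fun i j => h.1.1 i j⟩, h.1⟩⟩

/-- The rows of the cells of `T` whose entry is less than `N`. -/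
noncomputable def shapeBelow (lam : ℕ → ℕ) (T : ℕ × ℕ → ℕ) (N i : ℕ) : ℕ :=
  sInf {j | lam i ≤ j ∨ N ≤ T (i, j)}

theorem _root_.IsSSYT.lt_shapeBelow_iff {lam : ℕ → ℕ} {T : ℕ × ℕ → ℕ} (hT : IsSSYT lam T)
    {N i j : ℕ} : j < shapeBelow lam T N i ↔ j < lam i ∧ T (i, j) < N := by
  refine ⟨fun h => by simpa using Nat.notMem_of_lt_sInf h, fun h => lt_of_not_ge fun hle => ?_⟩
  have hne : {j | lam i ≤ j ∨ N ≤ T (i, j)}.Nonempty := ⟨lam i, Or.inl le_rfl⟩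
  obtain hlam | hN := Nat.sInf_mem hne
  · exact (hlam.trans hle).not_gt h.1
  · exact (hN.trans (hT.row_le hle h.1)).not_gt h.2

/-- The tableau obtained from `T` by erasing the entries equal to `N`. -/
def eraseEntry (N : ℕ) (T : ℕ × ℕ → ℕ) (c : ℕ × ℕ) : ℕ := if T c = N then 0 else T c

/-- The tableau obtained from `T` by filling the cells of `lam/μ` with `N`. -/
noncomputable def fillSkew (N : ℕ) (lam μ : ℕ → ℕ) (T : ℕ × ℕ → ℕ) (c : ℕ × ℕ) : ℕ :=
  if cellMem μ lam c then N else T c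

variable {N : ℕ} {lam μ : ℕ → ℕ} {T : ℕ × ℕ → ℕ}

theorem shapeBelow_mem_interlacing (hlam : Antitone lam) (hN : lam (N + 1) = 0)
    (hT : T ∈ tableaux (N + 1) lam) : shapeBelow lam T N ∈ interlacing N lam := by
  obtain ⟨hT, hlt⟩ := (mem_tableaux hlam hN).mp hT
  refine mem_interlacing.mpr
    ⟨fun i _ => ⟨?_, ?_⟩, fun i hi => Nat.eq_zero_of_not_pos fun hpos => ?_⟩
  · refine le_of_forall_lt fun j hj => hT.lt_shapeBelow_iff.mpr ⟨hj.trans_le (hlam i.le_succ), ?_⟩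
    exact (hT.2.2 i j hj).trans_le (Nat.lt_succ_iff.mp (hlt _ _ hj))
  · exact le_of_forall_lt fun j hj => (hT.lt_shapeBelow_iff.mp hj).1
  · obtain ⟨hj, hjN⟩ := hT.lt_shapeBelow_iff.mp hpos
    exact (hi.trans (hT.row_index_le hlam hj)).not_gt hjN

theorem eraseEntry_mem_tableaux (hlam : Antitone lam) (hN : lam (N + 1) = 0)
    (hT : T ∈ tableaux (N + 1) lam) : eraseEntry N T ∈ tableaux N (shapeBelow lam T N) := by
  have hμ := shapeBelow_mem_interlacing hlam hN hT
  obtain ⟨hT, hlt⟩ := (mem_tableaux hlam hN).mp hT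
  have hentry (i j : ℕ) (h : j < shapeBelow lam T N i) : eraseEntry N T (i, j) = T (i, j) :=
    if_neg (hT.lt_shapeBelow_iff.mp h).2.ne
  rw [mem_tableaux (antitone_of_mem_interlacing hμ) ((mem_interlacing.mp hμ).2 N le_rfl)]
  refine ⟨⟨fun i j h => ?_, fun i j h => ?_, fun i j h => ?_⟩, fun i j h => ?_⟩
  · rw [hT.lt_shapeBelow_iff] at h
    have := hT.1 i j
    have := hlt i j
    grind [eraseEntry]
  · rw [hentry i j (by lia), hentry i _ h]
    exact hT.2.1 i j (hT.lt_shapeBelow_iff.mp h).1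
  · rw [hentry i j (h.trans_le (antitone_of_mem_interlacing hμ i.le_succ)), hentry _ j h]
    exact hT.2.2 i j (hT.lt_shapeBelow_iff.mp h).1
  · exact hentry i j h ▸ (hT.lt_shapeBelow_iff.mp h).2

theorem fillSkew_mem_tableaux (hlam : Antitone lam) (hN : lam (N + 1) = 0)
    (hμ : μ ∈ interlacing N lam) (hT : T ∈ tableaux N μ) :
    fillSkew N lam μ T ∈ tableaux (N + 1) lam := by
  have hanti := antitone_of_mem_interlacing hμ
  have hle := le_of_mem_interlacing hμ
  obtain ⟨hμ, hμN⟩ := mem_interlacing.mp hμ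
  obtain ⟨hT, hlt⟩ := (mem_tableaux hanti (hμN N le_rfl)).mp hT
  refine (mem_tableaux hlam hN).mpr ⟨⟨fun i j h => ?_, fun i j h => ?_, fun i j h => ?_⟩,
    fun i j h => ?_⟩
  · have := hle i
    have := hT.1 i j
    grind [fillSkew, cellMem]
  · have := hT.2.1 i j
    have := hlt i j
    grind [fillSkew, cellMem]
  · have hi : i < N := lt_of_not_ge fun hi => by
      simp [eq_zero_of_antitone hlam hN (Nat.succ_le_succ hi)] at h
    have := hμ i hi
    have := hT.2.2 i j
    have := hlt i j
    grind [fillSkew, cellMem]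
  · have := hlt i j
    grind [fillSkew, cellMem]

theorem shapeBelow_fillSkew (hlam : Antitone lam) (hN : lam (N + 1) = 0)
    (hμ : μ ∈ interlacing N lam) (hT : T ∈ tableaux N μ) :
    shapeBelow lam (fillSkew N lam μ T) N = μ := by
  have hfill := ((mem_tableaux hlam hN).mp (fillSkew_mem_tableaux hlam hN hμ hT)).1
  obtain ⟨-, hlt⟩ := (mem_tableaux (antitone_of_mem_interlacing hμ)
    ((mem_interlacing.mp hμ).2 N le_rfl)).mp hT
  refine funext fun i => eq_of_forall_lt_iff fun j => hfill.lt_shapeBelow_iff.trans ?_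
  have := hlt i j
  have := le_of_mem_interlacing hμ i
  grind [fillSkew, cellMem]

theorem eraseEntry_fillSkew (hμ : μ ∈ interlacing N lam) (hT : T ∈ tableaux N μ) :
    eraseEntry N (fillSkew N lam μ T) = T := by
  obtain ⟨hT, hlt⟩ := (mem_tableaux (antitone_of_mem_interlacing hμ)
    ((mem_interlacing.mp hμ).2 N le_rfl)).mp hT
  funext ⟨i, j⟩
  have := hT.1 i j
  have := hlt i j
  grind [eraseEntry, fillSkew, cellMem]

theorem fillSkew_eraseEntry (hlam : Antitone lam) (hN : lam (N + 1) = 0)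
    (hT : T ∈ tableaux (N + 1) lam) :
    fillSkew N lam (shapeBelow lam T N) (eraseEntry N T) = T := by
  obtain ⟨hT, hlt⟩ := (mem_tableaux hlam hN).mp hT
  funext ⟨i, j⟩
  have := hT.1 i j
  have := hlt i j
  have := hT.lt_shapeBelow_iff (N := N) (i := i) (j := j)
  grind [eraseEntry, fillSkew, cellMem]

end Tableaux

section SchurPolynomial

variable {R : Type*} [CommSemiring R]

/-- The Schur polynomial of `lam`, a partition with at most `N` rows, at `x 0, …, x (N - 1)`. -/
noncomputable def schurPoly (N : ℕ) (lam : ℕ → ℕ) (x : ℕ → R) : R :=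
  ∑ T ∈ tableaux N lam, ∏ c ∈ cells N lam, x (T c)

theorem prod_cells_fillSkew {N : ℕ} {lam μ : ℕ → ℕ} (hμ : μ ∈ interlacing N lam)
    (T : ℕ × ℕ → ℕ) (x : ℕ → R) : ∏ c ∈ cells (N + 1) lam, x (fillSkew N lam μ T c) =
      (∏ i ∈ range (N + 1), x N ^ (lam i - μ i)) * ∏ c ∈ cells N μ, x (T c) := by
  have hμN : ∏ c ∈ cells N μ, x (T c) = ∏ c ∈ cells (N + 1) μ, x (T c) := by
    simp [prod_cells, prod_range_succ, (mem_interlacing.mp hμ).2 N le_rfl]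
  rw [hμN, prod_cells, prod_cells, ← prod_mul_distrib]
  refine prod_congr rfl fun i _ => ?_
  rw [← prod_range_mul_prod_Ico _ (le_of_mem_interlacing hμ i), mul_comm]
  congr 1
  · rw [← Nat.card_Ico, ← prod_const]
    exact prod_congr rfl fun j hj => congrArg x (if_pos (mem_Ico.mp hj))
  · exact prod_congr rfl fun j hj =>
      congrArg x (if_neg fun h => h.1.not_gt (mem_range.mp hj))

theorem schurPoly_succ {N : ℕ} {lam : ℕ → ℕ} (hlam : Antitone lam) (hN : lam (N + 1) = 0)
    (x : ℕ → R) : schurPoly (N + 1) lam x = ∑ μ ∈ interlacing N lam,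
      (∏ i ∈ range (N + 1), x N ^ (lam i - μ i)) * schurPoly N μ x := by
  simp only [schurPoly, mul_sum]
  rw [sum_sigma']
  symm
  refine sum_nbij' (fun p => fillSkew N lam p.1 p.2)
    (fun T => ⟨shapeBelow lam T N, eraseEntry N T⟩) (fun p hp => ?_) (fun T hT => ?_)
    (fun p hp => ?_) (fun T hT => fillSkew_eraseEntry hlam hN hT) fun p hp => ?_
  · obtain ⟨hμ, hT⟩ := mem_sigma.mp hp
    exact fillSkew_mem_tableaux hlam hN hμ hT
  · exact mem_sigma.mpr
      ⟨shapeBelow_mem_interlacing hlam hN hT, eraseEntry_mem_tableaux hlam hN hT⟩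
  · obtain ⟨hμ, hT⟩ := mem_sigma.mp hp
    exact Sigma.ext (shapeBelow_fillSkew hlam hN hμ hT) (heq_of_eq (eraseEntry_fillSkew hμ hT))
  · exact (prod_cells_fillSkew (mem_sigma.mp hp).1 p.2 x).symm

theorem schurPoly_zero {lam : ℕ → ℕ} (hlam : Antitone lam) (h0 : lam 0 = 0) (x : ℕ → R) :
    schurPoly 0 lam x = 1 := by
  have hzero (i : ℕ) : lam i = 0 := eq_zero_of_antitone hlam h0 i.zero_le
  have hempty : tableaux 0 lam = {0} := by
    ext T
    rw [mem_tableaux hlam h0, mem_singleton]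
    simp [hzero, IsSSYT, funext_iff]
  simp [schurPoly, hempty, prod_cells]

theorem alternant_beta {R : Type*} [CommRing R] (N : ℕ) {lam : ℕ → ℕ} (hlam : Antitone lam)
    (hN : lam N = 0) (x : ℕ → R) :
    alternant (fun j : Fin N => x j) (beta N lam) =
      (∏ n ∈ range N, ∏ j ∈ range n, (x j - x n)) * schurPoly N lam x := by
  induction N generalizing lam with
  | zero => simp [alternant, schurPoly_zero hlam hN]
  | succ N ih =>
    rw [alternant_beta_succ N x hlam, schurPoly_succ hlam hN, prod_range_succ, mul_sum, mul_sum]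
    refine sum_congr rfl fun μ hμ => ?_
    rw [ih (antitone_of_mem_interlacing hμ) ((mem_interlacing.mp hμ).2 N le_rfl)]
    ring

end SchurPolynomial

section Ribbons

/-- The content (diagonal) `j - i` of the cell `(i, j)`. -/
def content (c : ℕ × ℕ) : ℤ := c.2 - c.1

variable {lam ν : ℕ → ℕ} {k : ℕ}

theorem bijOn_content_of_isRibbon (hk : 0 < k) (h : IsRibbon lam ν k) :
    ∃ s, Set.BijOn content {c | cellMem lam ν c} (Set.Ico s (s + k)) := by
  obtain ⟨-, b, -, hmem, hsurj, hstep⟩ := h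
  have hcontent (m : ℕ) (hm : m < k) : content (b ⟨m, hm⟩) = content (b ⟨0, hk⟩) - m := by
    induction m with
    | zero => simp
    | succ m ih =>
      have := ih (by lia)
      have := hstep ⟨m, by lia⟩ hm
      simp only [content] at *
      lia
  refine ⟨content (b ⟨0, hk⟩) - k + 1, fun c hc => ?_, fun c hc c' hc' heq => ?_, fun t ht => ?_⟩
  · obtain ⟨⟨m, hm⟩, rfl⟩ := hsurj c hc
    rw [hcontent m hm, Set.mem_Ico]
    lia
  · obtain ⟨⟨m, hm⟩, rfl⟩ := hsurj c hc
    obtain ⟨⟨m', hm'⟩, rfl⟩ := hsurj c' hc'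
    rw [hcontent m hm, hcontent m' hm'] at heq
    congr
    lia
  · obtain ⟨hst, hts⟩ := ht
    have hm : (content (b ⟨0, hk⟩) - t).toNat < k := by lia
    exact ⟨b ⟨_, hm⟩, hmem _, by rw [hcontent _ hm]; lia⟩

theorem eq_of_content_eq (hinj : Set.InjOn content {c | cellMem lam ν c}) {i j i' j' : ℕ}
    (hc : cellMem lam ν (i, j)) (hc' : cellMem lam ν (i', j')) (h : (j : ℤ) - i = j' - i') :
    i = i' ∧ j = j' :=
  Prod.mk.inj (hinj hc hc' h)

theorem content_lt_content_of_row_lt (hν : Antitone ν)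
    (hinj : Set.InjOn content {c | cellMem lam ν c}) {i j i' j' : ℕ} (hc : cellMem lam ν (i, j))
    (hc' : cellMem lam ν (i', j')) (h : i < i') : content (i', j') < content (i, j) := by
  simp only [content]
  by_contra! hle
  have hν_le : ν i' ≤ ν i := hν h.le
  have hcell : cellMem lam ν (i, j' - (i' - i)) := by
    simp only [cellMem] at *
    lia
  exact h.ne (eq_of_content_eq hinj hcell hc' (by lia)).1

theorem adjacent_of_content_eq_succ (hlam : Antitone lam) (hν : Antitone ν)
    (hinj : Set.InjOn content {c | cellMem lam ν c}) {i j i' j' : ℕ} (hc : cellMem lam ν (i, j))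
    (hc' : cellMem lam ν (i', j')) (h : content (i, j) = content (i', j') + 1) :
    (i' = i ∧ j = j' + 1) ∨ (j' = j ∧ i' = i + 1) := by
  have hi : i ≤ i' := le_of_not_gt fun hi => by
    have := content_lt_content_of_row_lt hν hinj hc' hc hi
    lia
  simp only [content] at h
  obtain rfl | hi := hi.eq_or_lt
  · lia
  have hlam_le : lam (i + 1) ≤ lam i := hlam i.le_succ
  have hν_le : ν i' ≤ ν (i + 1) := hν hi
  have hcell : cellMem lam ν (i + 1, j) := by
    simp only [cellMem] at *
    lia
  have := eq_of_content_eq hinj hcell hc' (by lia)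
  lia

theorem isRibbon_of_bijOn_content (hlam : Antitone lam) (hν : Antitone ν) (hle : lam ≤ ν) {s : ℤ}
    (h : Set.BijOn content {c | cellMem lam ν c} (Set.Ico s (s + k))) : IsRibbon lam ν k := by
  have hlabel (m : Fin k) : ∃ c, cellMem lam ν c ∧ content c = s + k - 1 - m :=
    h.surjOn (Set.mem_Ico.mpr (by have := m.isLt; lia))
  choose b hmem hcontent using hlabel
  refine ⟨hle, b, fun m m' hmm' => ?_, hmem, fun c hc => ?_, fun m hm => ?_⟩
  · have := hcontent m
    rw [hmm', hcontent m'] at this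
    exact Fin.ext (by lia)
  · obtain ⟨hst, hts⟩ := h.mapsTo hc
    refine ⟨⟨(s + k - 1 - content c).toNat, by lia⟩, h.injOn (hmem _) hc ?_⟩
    rw [hcontent]
    simp only
    lia
  · refine adjacent_of_content_eq_succ hlam hν h.injOn (hmem m) (hmem _) ?_
    rw [Prod.mk.eta, Prod.mk.eta, hcontent, hcontent]
    push_cast
    lia

/-- `ν` arises from `lam` by adding a ribbon of `k` cells in the rows `p, …, q`: below row `p` the
boundary is shifted by one cell along the diagonal, `ν (i + 1) = lam i + 1`, and the length of row
`p` is determined by the number of cells. -/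
structure IsRibbonBetween (lam ν : ℕ → ℕ) (k p q : ℕ) : Prop where
  le : p ≤ q
  eq_of_lt : ∀ i < p, ν i = lam i
  eq_of_gt : ∀ i > q, ν i = lam i
  succ_eq : ∀ i, p ≤ i → i < q → ν (i + 1) = lam i + 1
  lt_top : lam p < ν p
  top_add_eq : ν p + q = lam q + k + p

theorem succ_eq_of_bijOn_content (hlam : Antitone lam) (hν : Antitone ν) {s t : ℤ}
    (h : Set.BijOn content {c | cellMem lam ν c} (Set.Ico s t)) {p jp q jq : ℕ}
    (hp : cellMem lam ν (p, jp)) (hq : cellMem lam ν (q, jq)) {i : ℕ} (hpi : p ≤ i) (hiq : i < q) :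
    ν (i + 1) = lam i + 1 := by
  have hν_succ : ν (i + 1) ≤ ν i := hν i.le_succ
  have hlam_succ : lam (i + 1) ≤ lam i := hlam i.le_succ
  refine le_antisymm (le_of_not_gt fun hgt => ?_) (le_of_not_gt fun hlt => ?_)
  · have hcell : cellMem lam ν (i, lam i) := by simp only [cellMem]; lia
    have hcell' : cellMem lam ν (i + 1, lam i + 1) := by simp only [cellMem]; lia
    have := eq_of_content_eq h.injOn hcell hcell' (by lia)
    lia
  · have hcontent : (lam i : ℤ) - i - 1 ∈ Set.Ico s t := by
      have hps := h.mapsTo hp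
      have hqs := h.mapsTo hq
      have := hlam hpi
      have := hν hiq
      simp only [content, Set.mem_Ico, cellMem] at *
      lia
    obtain ⟨⟨i', j'⟩, hc, hc_content⟩ := h.surjOn hcontent
    have := hlam (a := i') (b := i)
    have := hν (a := i + 1) (b := i')
    simp only [content, Set.mem_ofPred_eq, cellMem] at hc hc_content
    lia

theorem exists_isRibbonBetween_of_bijOn_content (hlam : Antitone lam) (hν : Antitone ν)
    (hle : lam ≤ ν) (hk : 0 < k) {s : ℤ}
    (h : Set.BijOn content {c | cellMem lam ν c} (Set.Ico s (s + k))) :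
    ∃ p q, IsRibbonBetween lam ν k p q := by
  obtain ⟨⟨p, jp⟩, hp, hp_content⟩ := h.surjOn (Set.mem_Ico.mpr (by lia) : s + k - 1 ∈ _)
  obtain ⟨⟨q, jq⟩, hq, hq_content⟩ := h.surjOn (Set.mem_Ico.mpr (by lia) : s ∈ _)
  have hrow_mem {i : ℕ} (hi : lam i < ν i) : p ≤ i ∧ i ≤ q := by
    have hcell : cellMem lam ν (i, lam i) := ⟨le_rfl, hi⟩
    have hcell_mem := h.mapsTo hcell
    have htop := content_lt_content_of_row_lt hν h.injOn hcell hp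
    have hbot := content_lt_content_of_row_lt hν h.injOn hq hcell
    simp only [Set.mem_Ico] at hcell_mem
    lia
  have hrow_eq {i : ℕ} (hi : ¬(p ≤ i ∧ i ≤ q)) : ν i = lam i :=
    le_antisymm (le_of_not_gt fun hlt => hi (hrow_mem hlt)) (hle i)
  have hp_lt : lam p < ν p := hp.1.trans_lt hp.2
  have hq_lt : lam q < ν q := hq.1.trans_lt hq.2
  refine ⟨p, q, (hrow_mem hq_lt).1, fun i hi => hrow_eq (by lia), fun i hi => hrow_eq (by lia),
    fun i => succ_eq_of_bijOn_content hlam hν h hp hq, hp_lt, ?_⟩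
  have hend := h.mapsTo (show cellMem lam ν (p, ν p - 1) by simp only [cellMem]; lia)
  have hstart := h.mapsTo (show cellMem lam ν (q, lam q) from ⟨le_rfl, hq_lt⟩)
  simp only [content, Set.mem_Ico, Set.mem_ofPred_eq, cellMem] at *
  lia

namespace IsRibbonBetween

variable {p q : ℕ}

theorem lt_of_mem_Icc (hlam : Antitone lam) (h : IsRibbonBetween lam ν k p q) {i : ℕ} (hpi : p ≤ i)
    (hiq : i ≤ q) : lam i < ν i := by
  obtain rfl | hpi := hpi.eq_or_lt
  · exact h.lt_top
  obtain ⟨i, rfl⟩ := Nat.exists_eq_add_of_lt hpi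
  rw [h.succ_eq _ (by lia) (by lia), Nat.lt_succ_iff]
  exact hlam (Nat.le_succ _)

theorem setOf_lt_eq_Icc (hlam : Antitone lam) (h : IsRibbonBetween lam ν k p q) :
    {i | lam i < ν i} = Set.Icc p q := by
  ext i
  refine ⟨fun hi => ⟨le_of_not_gt fun hip => ?_, le_of_not_gt fun hqi => ?_⟩,
    fun hi => h.lt_of_mem_Icc hlam hi.1 hi.2⟩
  · exact hi.ne' (h.eq_of_lt i hip)
  · exact hi.ne' (h.eq_of_gt i hqi)

theorem le_outer (hlam : Antitone lam) (h : IsRibbonBetween lam ν k p q) : lam ≤ ν := by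
  intro i
  by_cases hi : p ≤ i ∧ i ≤ q
  · exact (h.lt_of_mem_Icc hlam hi.1 hi.2).le
  · obtain hi | hi : i < p ∨ q < i := by lia
    exacts [(h.eq_of_lt i hi).ge, (h.eq_of_gt i hi).ge]

theorem injOn_content (hlam : Antitone lam) (h : IsRibbonBetween lam ν k p q) :
    Set.InjOn content {c | cellMem lam ν c} := by
  have hrow {i j : ℕ} (hc : cellMem lam ν (i, j)) : p ≤ i ∧ i ≤ q :=
    (h.setOf_lt_eq_Icc hlam).subset (hc.1.trans_lt hc.2)
  have hdecr {i j i' j' : ℕ} (hc : cellMem lam ν (i, j)) (hc' : cellMem lam ν (i', j'))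
      (hii' : i < i') : (j' : ℤ) - i' < j - i := by
    obtain ⟨r, rfl⟩ := Nat.exists_eq_add_of_lt hii'
    have := hrow hc
    have := hrow hc'
    have := h.succ_eq (i + r) (by lia) (by lia)
    have := hlam (Nat.le_add_right i r)
    simp only [cellMem] at *
    lia
  rintro ⟨i, j⟩ hc ⟨i', j'⟩ hc' heq
  simp only [content] at heq
  obtain hii' | rfl | hii' := lt_trichotomy i i'
  · exact absurd heq.symm (hdecr hc hc' hii').ne
  · rw [Prod.mk.injEq]
    lia
  · exact absurd heq (hdecr hc' hc hii').ne

theorem bijOn_content (hlam : Antitone lam) (hν : Antitone ν) (h : IsRibbonBetween lam ν k p q) :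
    Set.BijOn content {c | cellMem lam ν c} (Set.Ico (lam q - q : ℤ) (lam q - q + k)) := by
  have htop := h.top_add_eq
  refine ⟨fun ⟨i, j⟩ hc => ?_, h.injOn_content hlam, fun t ⟨hqt, htk⟩ => ?_⟩
  · obtain ⟨hpi, hiq⟩ := (h.setOf_lt_eq_Icc hlam).subset (hc.1.trans_lt hc.2)
    have := hlam hiq
    have := hν hpi
    simp only [content, Set.mem_Ico, Set.mem_ofPred_eq, cellMem] at *
    lia
  · have hex : ∃ i, p ≤ i ∧ (lam i : ℤ) - i ≤ t := ⟨q, h.le, hqt⟩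
    obtain ⟨⟨hpi, hit⟩, hmin⟩ := (Nat.find_eq_iff hex).mp rfl
    generalize Nat.find hex = i at hpi hit hmin
    refine ⟨(i, (t + i).toNat), ⟨by simp only; lia, ?_⟩, by simp only [content]; lia⟩
    obtain rfl | hpi := hpi.eq_or_lt
    · simp only
      lia
    · obtain ⟨r, rfl⟩ := Nat.exists_eq_add_of_lt hpi
      have hiq : p + r < q := lt_of_not_ge fun hqr => hmin q (by lia) ⟨h.le, hqt⟩
      have := hmin (p + r) (by lia)
      have := h.succ_eq (p + r) (by lia) hiq
      simp only
      lia

theorem isRibbon (hlam : Antitone lam) (hν : Antitone ν) (h : IsRibbonBetween lam ν k p q) :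
    IsRibbon lam ν k :=
  isRibbon_of_bijOn_content hlam hν (h.le_outer hlam) (h.bijOn_content hlam hν)

theorem card_rows (hlam : Antitone lam) (h : IsRibbonBetween lam ν k p q) :
    Nat.card {i // lam i < ν i} = q + 1 - p := by
  have : Nat.card {i | lam i < ν i} = q + 1 - p := by
    rw [h.setOf_lt_eq_Icc hlam, Nat.card_eq_card_toFinset, Set.toFinset_Icc, Nat.card_Icc]
  exact this

theorem outer_eq_zero (hν : Antitone ν) (h : IsRibbonBetween lam ν k p q) {N : ℕ}
    (hlam : Antitone lam) (hN : lam N = 0) : ν (N + k) = 0 := by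
  have hpN : p ≤ N := le_of_not_gt fun hNp => by
    have := h.eq_of_lt N hNp
    have := hν hNp.le
    have := h.lt_top
    lia
  have := h.top_add_eq
  have := h.lt_top
  have hlam0 : lam (N + k) = 0 := eq_zero_of_antitone hlam hN (by lia)
  rw [h.eq_of_gt (N + k) ?_, hlam0]
  by_contra!
  have := eq_zero_of_antitone hlam hN (i := q) (by lia)
  lia

theorem beta_comp_cycleIcc {N : ℕ} {p q : Fin N} (h : IsRibbonBetween lam ν k p q) :
    beta N ν ∘ Fin.cycleIcc p q = beta N lam + Pi.single q k := by
  have : NeZero N := ⟨p.pos.ne'⟩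
  have hpq : p ≤ q := h.le
  funext i
  simp only [Function.comp_apply, Pi.add_apply, beta]
  obtain hip | hpi := lt_or_ge i p
  · rw [Fin.cycleIcc_of_lt hip, h.eq_of_lt i hip, Pi.single_eq_of_ne (hip.trans_le hpq).ne,
      add_zero]
  obtain hiq | rfl | hqi := lt_trichotomy i q
  · have hval : ((i + 1 : Fin N) : ℕ) = i + 1 := Fin.val_add_one_of_lt' (by lia)
    rw [Fin.cycleIcc_of_ge_of_lt hpi hiq, hval, h.succ_eq i hpi hiq, Pi.single_eq_of_ne hiq.ne,
      Fin.val_rev, Fin.val_rev, hval]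
    lia
  · have := h.top_add_eq
    rw [Fin.cycleIcc_of_last hpq, Pi.single_eq_same, Fin.val_rev, Fin.val_rev]
    lia
  · rw [Fin.cycleIcc_of_gt hqi, h.eq_of_gt i hqi, Pi.single_eq_of_ne hqi.ne', add_zero]

end IsRibbonBetween

theorem exists_isRibbonBetween (hlam : Antitone lam) (hν : Antitone ν) (hk : 0 < k)
    (h : IsRibbon lam ν k) : ∃ p q, IsRibbonBetween lam ν k p q := by
  obtain ⟨s, hs⟩ := bijOn_content_of_isRibbon hk h
  exact exists_isRibbonBetween_of_bijOn_content hlam hν h.1 hk hs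

theorem beta_injective {N : ℕ} {μ ν : ℕ → ℕ} (hμ : ∀ i, N ≤ i → μ i = 0)
    (hν : ∀ i, N ≤ i → ν i = 0) (h : beta N μ = beta N ν) : μ = ν := by
  funext i
  obtain hi | hi := lt_or_ge i N
  · exact Nat.add_right_cancel (congrFun h ⟨i, hi⟩)
  · rw [hμ i hi, hν i hi]

theorem IsRibbonBetween.outer_unique (hlam : Antitone lam) {N p p' q : ℕ} {ν' : ℕ → ℕ}
    (hν : Antitone ν) (hν' : Antitone ν') (hN : ν N = 0) (hN' : ν' N = 0)
    (h : IsRibbonBetween lam ν k p q) (h' : IsRibbonBetween lam ν' k p' q) : ν = ν' := by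
  have hq : q < N := lt_of_not_ge fun hNq => by
    have := h.lt_of_mem_Icc hlam h.le le_rfl
    have := eq_zero_of_antitone hν hN hNq
    lia
  lift q to Fin N using hq
  lift p to Fin N using h.le.trans_lt q.isLt
  lift p' to Fin N using h'.le.trans_lt q.isLt
  refine beta_injective (fun _ => eq_zero_of_antitone hν hN) (fun _ => eq_zero_of_antitone hν' hN')
    (((beta_strictAnti N hν).range_inj (beta_strictAnti N hν')).mp ?_)
  rw [← (Fin.cycleIcc p q).surjective.range_comp, h.beta_comp_cycleIcc,
    ← h'.beta_comp_cycleIcc, (Fin.cycleIcc p' q).surjective.range_comp]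

/-- The partition obtained from `lam` by adding a ribbon of `k` cells in the rows `p, …, q`. -/
def addRibbon (lam : ℕ → ℕ) (k p q i : ℕ) : ℕ :=
  if i = p then lam q + k + p - q else if p < i ∧ i ≤ q then lam (i - 1) + 1 else lam i

theorem isRibbonBetween_addRibbon {p q : ℕ} (hpq : p ≤ q) (hp : lam p + q < lam q + k + p) :
    IsRibbonBetween lam (addRibbon lam k p q) k p q where
  le := hpq
  eq_of_lt i hi := by grind [addRibbon]
  eq_of_gt i hi := by grind [addRibbon]
  succ_eq i hpi hiq := by grind [addRibbon]
  lt_top := by grind [addRibbon]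
  top_add_eq := by grind [addRibbon]

theorem addRibbon_antitone (hlam : Antitone lam) {p q : ℕ} (hpq : p ≤ q)
    (hp : lam p + q < lam q + k + p) (hpred : ∀ i < p, lam q + k + i < lam i + q) :
    Antitone (addRibbon lam k p q) := by
  refine antitone_nat_of_succ_le fun i => ?_
  have := hlam i.le_succ
  have := hlam (i.sub_le 1)
  have := hpred i
  grind [addRibbon]

/-- The top row `p` is the first one whose beta number is exceeded by `beta N lam q + k`. -/
theorem exists_isRibbonBetween_of_forall_beta_ne (hlam : Antitone lam) (hk : 0 < k) {N : ℕ}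
    {q : Fin N} (hq : ∀ i, beta N lam i ≠ beta N lam q + k) :
    ∃ ν, Antitone ν ∧ ∃ p, IsRibbonBetween lam ν k p q := by
  have hex : ∃ i, lam i + q < lam q + k + i := ⟨q, by lia⟩
  obtain ⟨hp, hmin⟩ := (Nat.find_eq_iff hex).mp rfl
  generalize Nat.find hex = p at hp hmin
  have hpq : p ≤ q := le_of_not_gt fun hqp => hmin q hqp (by lia)
  refine ⟨_, addRibbon_antitone hlam hpq hp fun i hi => ?_, p, isRibbonBetween_addRibbon hpq hp⟩
  have hne := hq ⟨i, by lia⟩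
  have := hmin i hi
  simp only [beta, Fin.val_rev] at hne
  lia

/-- The partitions obtained from `lam` by adding a `k`-ribbon. -/
abbrev RibbonExtension (lam : ℕ → ℕ) (k : ℕ) : Type :=
  {ν : ℕ → ℕ // (∀ i, ν (i + 1) ≤ ν i) ∧ IsRibbon lam ν k}

namespace RibbonExtension

theorem antitone (ν : RibbonExtension lam k) : Antitone ν.1 := antitone_nat_of_succ_le ν.2.1

/-- The last row occupied by the ribbon. -/
noncomputable def endRow (ν : RibbonExtension lam k) : ℕ := sSup {i | lam i < ν.1 i}

theorem endRow_eq (hlam : Antitone lam) {ν : RibbonExtension lam k} {p q : ℕ}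
    (h : IsRibbonBetween lam ν.1 k p q) : ν.endRow = q := by
  rw [endRow, h.setOf_lt_eq_Icc hlam, csSup_Icc h.le]

theorem exists_isRibbonBetween_endRow (hlam : Antitone lam) (hk : 0 < k)
    (ν : RibbonExtension lam k) : ∃ p, IsRibbonBetween lam ν.1 k p ν.endRow := by
  obtain ⟨p, q, h⟩ := exists_isRibbonBetween hlam ν.antitone hk ν.2.2
  exact ⟨p, endRow_eq hlam h ▸ h⟩

variable {N : ℕ}

theorem apply_eq_zero (hlam : Antitone lam) (hN : lam N = 0) (hk : 0 < k)
    (ν : RibbonExtension lam k) : ν.1 (N + k) = 0 := by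
  obtain ⟨p, h⟩ := ν.exists_isRibbonBetween_endRow hlam hk
  exact h.outer_eq_zero ν.antitone hlam hN

theorem endRow_lt (hlam : Antitone lam) (hN : lam N = 0) (hk : 0 < k)
    (ν : RibbonExtension lam k) : ν.endRow < N + k := by
  obtain ⟨p, h⟩ := ν.exists_isRibbonBetween_endRow hlam hk
  refine lt_of_not_ge fun hle => ?_
  have := h.lt_of_mem_Icc hlam h.le le_rfl
  have := eq_zero_of_antitone ν.antitone (ν.apply_eq_zero hlam hN hk) hle
  lia

theorem endRow_injective (hlam : Antitone lam) (hN : lam N = 0) (hk : 0 < k) :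
    Function.Injective (endRow (lam := lam) (k := k)) := by
  intro ν ν' heq
  obtain ⟨p, h⟩ := ν.exists_isRibbonBetween_endRow hlam hk
  obtain ⟨p', h'⟩ := ν'.exists_isRibbonBetween_endRow hlam hk
  exact Subtype.ext (h.outer_unique hlam ν.antitone ν'.antitone (ν.apply_eq_zero hlam hN hk)
    (ν'.apply_eq_zero hlam hN hk) (heq ▸ h'))

theorem finite (hlam : Antitone lam) (hN : lam N = 0) (hk : 0 < k) :
    Finite (RibbonExtension lam k) :=
  Finite.of_injective (fun ν => (⟨ν.endRow, ν.endRow_lt hlam hN hk⟩ : Fin (N + k)))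
    fun _ _ h => endRow_injective hlam hN hk (congrArg Fin.val h)

/-- The sign of a ribbon with `r` rows is `(-1) ^ (r - 1)`. -/
noncomputable def sign (ν : RibbonExtension lam k) : ℤ :=
  (-1) ^ (Nat.card {i // lam i < ν.1 i} - 1)

variable {R : Type*} [CommRing R]

theorem sign_mul_alternant (hlam : Antitone lam) (hk : 0 < k) (ν : RibbonExtension lam k)
    {M : ℕ} (hM : ν.endRow < M) (x : Fin M → R) :
    ν.sign * alternant x (beta M ν.1) =
      alternant x (beta M lam + Pi.single ⟨ν.endRow, hM⟩ k) := by
  obtain ⟨p, h⟩ := ν.exists_isRibbonBetween_endRow hlam hk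
  have hp : p < M := h.le.trans_lt hM
  have := IsRibbonBetween.beta_comp_cycleIcc (p := ⟨p, hp⟩) (q := ⟨ν.endRow, hM⟩) h
  rw [← this, alternant_comp_perm, Fin.sign_cycleIcc_of_le h.le, sign, h.card_rows hlam,
    Nat.sub_right_comm, Nat.add_sub_cancel]
  push_cast
  rfl

/-- A term whose row is not the last row of a ribbon has a repeated exponent. -/
theorem sum_sign_mul_alternant (hlam : Antitone lam) (hN : lam N = 0) (hk : 0 < k)
    [Fintype (RibbonExtension lam k)] (x : Fin (N + k) → R) :
    ∑ ν : RibbonExtension lam k, ν.sign * alternant x (beta (N + k) ν.1) =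
      ∑ i, alternant x (beta (N + k) lam + Pi.single i k) := by
  refine Fintype.sum_of_injective (fun ν => ⟨ν.endRow, ν.endRow_lt hlam hN hk⟩)
    (fun _ _ h => endRow_injective hlam hN hk (congrArg Fin.val h)) _ _ (fun i hi => ?_)
    fun ν => ν.sign_mul_alternant hlam hk _ x
  by_cases hrepeat : ∃ j, beta (N + k) lam j = beta (N + k) lam i + k
  · obtain ⟨j, hj⟩ := hrepeat
    have hij : i ≠ j := fun hij => by
      rw [hij] at hj
      lia
    refine alternant_eq_zero_of_eq x hij ?_
    rw [Pi.add_apply, Pi.add_apply, Pi.single_eq_same, Pi.single_eq_of_ne hij.symm, hj, add_zero]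
  · obtain ⟨ν, hν, p, h⟩ := exists_isRibbonBetween_of_forall_beta_ne hlam hk (not_exists.mp hrepeat)
    let ν' : RibbonExtension lam k := ⟨ν, fun i => hν i.le_succ, h.isRibbon hlam hν⟩
    exact absurd ⟨ν', Fin.ext (endRow_eq (ν := ν') hlam h)⟩ hi

end RibbonExtension

end Ribbons

section PowerSeries

open RibbonExtension

variable {lam : ℕ → ℕ} {k N : ℕ}

theorem schurPoly_mul_sum_pow {R : Type*} [CommRing R] [IsDomain R] {x : ℕ → R}
    (hx : Function.Injective x) (hlam : Antitone lam) (hN : lam N = 0) (hk : 0 < k)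
    [Fintype (RibbonExtension lam k)] :
    schurPoly (N + k) lam x * ∑ i ∈ range (N + k), x i ^ k =
      ∑ ν : RibbonExtension lam k, ν.sign * schurPoly (N + k) ν.1 x := by
  have hvandermonde : ∏ n ∈ range (N + k), ∏ j ∈ range n, (x j - x n) ≠ 0 :=
    prod_ne_zero_iff.mpr fun n _ => prod_ne_zero_iff.mpr fun j hj =>
      sub_ne_zero.mpr (hx.ne (mem_range.mp hj).ne)
  have hlamM : lam (N + k) = 0 := eq_zero_of_antitone hlam hN (by lia)
  refine mul_left_cancel₀ hvandermonde ?_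
  calc _ = (∑ i : Fin (N + k), x i ^ k) * alternant (fun i : Fin (N + k) => x i)
        (beta (N + k) lam) := by
        rw [alternant_beta _ hlam hlamM, ← Finset.sum_range (fun i => x i ^ k)]
        ring
    _ = ∑ ν : RibbonExtension lam k, ν.sign * alternant (fun i : Fin (N + k) => x i)
        (beta (N + k) ν.1) := by
        rw [sum_sign_mul_alternant hlam hN hk, sum_alternant_add_single]
    _ = _ := by
        rw [mul_sum]
        refine sum_congr rfl fun ν _ => ?_
        rw [alternant_beta _ ν.antitone (ν.apply_eq_zero hlam hN hk), mul_left_comm]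

theorem coeff_mul_eq_coeff_mul {σ R : Type*} [CommSemiring R] {f g : MvPowerSeries σ R}
    {p q : MvPolynomial σ R} {L : σ →₀ ℕ} (hf : ∀ D ≤ L, MvPowerSeries.coeff D f = p.coeff D)
    (hg : ∀ D ≤ L, MvPowerSeries.coeff D g = q.coeff D) :
    MvPowerSeries.coeff L (f * g) = (p * q).coeff L := by
  rw [MvPowerSeries.coeff_mul, MvPolynomial.coeff_mul]
  refine sum_congr rfl fun D hD => ?_
  have hsum : D.1 + D.2 = L := mem_antidiagonal.mp hD
  rw [hf _ (hsum ▸ le_self_add), hg _ (hsum ▸ le_add_self)]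

theorem card_entries_eq (hlam : Antitone lam) (hN : lam N = 0) (T : ℕ × ℕ → ℕ) (v : ℕ) :
    Nat.card {c : ℕ × ℕ // c.2 < lam c.1 ∧ T c = v} =
      (∑ c ∈ cells N lam, Finsupp.single (T c) 1) v := by
  simp only [Finsupp.finsetSum_apply, Finsupp.single_apply, sum_boole, Nat.cast_id]
  refine Nat.subtype_card _ fun c => ?_
  rw [mem_filter, mem_cells_of_antitone hlam hN]

theorem coeff_schurS (hlam : Antitone lam) (hN : lam N = 0) {L : ℕ →₀ ℕ}
    (hL : L.support ⊆ range N) :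
    MvPowerSeries.coeff L (schurS lam) =
      (schurPoly N lam (MvPolynomial.X : ℕ → MvPolynomial ℕ ℚ)).coeff L := by
  have hmonomial (T : ℕ × ℕ → ℕ) : (∏ c ∈ cells N lam, MvPolynomial.X (T c) : MvPolynomial ℕ ℚ) =
      MvPolynomial.monomial (∑ c ∈ cells N lam, Finsupp.single (T c) 1) 1 :=
    (MvPolynomial.monomial_sum_one _ _).symm
  simp only [schurPoly, hmonomial, MvPolynomial.coeff_sum, MvPolynomial.coeff_monomial, sum_boole]
  refine congrArg Nat.cast (Nat.subtype_card _ fun T => ?_)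
  simp only [mem_filter, mem_tableaux hlam hN, card_entries_eq hlam hN, ← DFunLike.ext_iff]
  refine ⟨fun ⟨⟨hT, _⟩, h⟩ => ⟨hT, h⟩, fun ⟨hT, h⟩ => ⟨⟨hT, fun i j hij => ?_⟩, h⟩⟩
  have hle : Finsupp.single (T (i, j)) 1 ≤ L := h ▸ single_le_sum_of_canonicallyOrdered
    (f := fun c => Finsupp.single (T c) 1) ((mem_cells_of_antitone hlam hN).mpr hij)
  have hmem : T (i, j) ∈ L.support := Finsupp.support_mono hle (by simp)
  exact mem_range.mp (hL hmem)

theorem coeff_pS (hk : 0 < k) {L : ℕ →₀ ℕ} (hL : L.support ⊆ range N) :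
    MvPowerSeries.coeff L (pS k) =
      (∑ i ∈ range N, MvPolynomial.X i ^ k : MvPolynomial ℕ ℚ).coeff L := by
  simp only [MvPolynomial.coeff_sum, MvPolynomial.coeff_X_pow]
  change (if ∃ j, L = Finsupp.single j k then (1 : ℚ) else 0) = _
  split_ifs with hsingle
  · obtain ⟨j, rfl⟩ := hsingle
    have hj : j ∈ range N := hL (by simp [hk.ne'])
    simp [Finsupp.single_left_inj hk.ne', mem_range.mp hj]
  · exact (sum_eq_zero fun i _ => if_neg fun h => hsingle ⟨i, h.symm⟩).symm

theorem coeff_schurS_mul_pS (hlam : Antitone lam) (hN : lam N = 0) (hk : 0 < k)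
    [Fintype (RibbonExtension lam k)] {L : ℕ →₀ ℕ} (hL : L.support ⊆ range (N + k)) :
    MvPowerSeries.coeff L (schurS lam * pS k) =
      ∑ ν : RibbonExtension lam k, ν.sign * MvPowerSeries.coeff L (schurS ν.1) := by
  have hlamM : lam (N + k) = 0 := eq_zero_of_antitone hlam hN (N.le_add_right k)
  rw [coeff_mul_eq_coeff_mul
      (fun D hD => coeff_schurS hlam hlamM ((Finsupp.support_mono hD).trans hL))
      (fun D hD => coeff_pS hk ((Finsupp.support_mono hD).trans hL)),
    schurPoly_mul_sum_pow MvPolynomial.X_injective hlam hN hk, MvPolynomial.coeff_sum]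
  refine sum_congr rfl fun ν _ => ?_
  rw [coeff_schurS ν.antitone (ν.apply_eq_zero hlam hN hk) hL, ← zsmul_eq_mul,
    MvPolynomial.coeff_smul, zsmul_eq_mul]

end PowerSeries

end MurnaghanNakayama

/-- Murnaghan–Nakayama rule: for a partition `λ` and `k ≥ 1`,
`s_λ · p_k = Σ_ν sgn(ν/λ) s_ν`, summed over partitions `ν ⊇ λ` with `ν/λ` a
`k`-ribbon, where `sgn(ν/λ) = (−1)^{r−1}` and `r` is the number of rows occupied
by the ribbon. -/
theorem murnaghan_nakayama (lam : ℕ → ℕ)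
    (hpart : ∀ i, lam (i + 1) ≤ lam i) (hfin : ∃ N, lam N = 0)
    (k : ℕ) (hk : 0 < k) :
    schurS lam * pS k
      = ∑ᶠ ν : {ν : ℕ → ℕ // (∀ i, ν (i + 1) ≤ ν i) ∧ IsRibbon lam ν k},
          ((-1 : ℚ) ^ (Nat.card {i : ℕ // lam i < ν.1 i} - 1)) • schurS ν.1 := by
  have hlam : Antitone lam := antitone_nat_of_succ_le hpart
  obtain ⟨N₀, hN₀⟩ := hfin
  have := MurnaghanNakayama.RibbonExtension.finite hlam hN₀ hk
  have := Fintype.ofFinite (MurnaghanNakayama.RibbonExtension lam k)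
  rw [finsum_eq_sum_of_fintype]
  ext L
  obtain ⟨B, hB⟩ := L.support.exists_nat_subset_range
  have hN : lam (N₀ + B) = 0 :=
    MurnaghanNakayama.eq_zero_of_antitone hlam hN₀ (N₀.le_add_right B)
  have hL : L.support ⊆ Finset.range (N₀ + B + k) :=
    hB.trans (Finset.range_mono (by lia))
  rw [MurnaghanNakayama.coeff_schurS_mul_pS hlam hN hk hL, map_sum]
  refine Finset.sum_congr rfl fun ν _ => ?_
  rw [map_smul, smul_eq_mul, MurnaghanNakayama.RibbonExtension.sign]
  push_cast
  rfl
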